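/- arXiv:math/0303370 — 2 statements merged into one kernel-verified Lean document; each statement's English description precedes it below -/
import Mathlib

section
/- Let (A,B) be an invertible Jones pair of n×n complex matrices with A symmetric, let H ∈ N_{A,B}, and let K be an n×n matrix. Then K is paired with H if and only if Kᵀ is paired with Hᵀ (note Hᵀ ∈ N_{A,B} since A is symmetric). Moreover, if K is paired with H, then H∘A ∈ N_A, Kᵀ∘A ∈ N_{Bᵀ}, and Θ_A(H∘A) = Θ_{Bᵀ}(Kᵀ∘A). -/
open Matrix

variable {m : Type*} [Fintype m] [DecidableEq m]

/-- The Schur (entrywise) inverse `A^(-)` of a matrix: `(A^(-))_{ij} = (A_{ij})⁻¹`. -/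
noncomputable def sinv (A : Matrix m m ℂ) : Matrix m m ℂ := Matrix.of fun i j => (A i j)⁻¹

/-- A type-II matrix: a Schur invertible matrix `W` with `W * (W^(-))ᵀ = n • I`,
where `n` is the size of the matrix. -/
def IsTypeII (A : Matrix m m ℂ) : Prop :=
  (∀ i j, A i j ≠ 0) ∧ A * (sinv A)ᵀ = (Fintype.card m : ℂ) • (1 : Matrix m m ℂ)

/-- `v_{ij} = (A e_i) ∘ (B e_j)`: the entrywise product of column `i` of `A`
with column `j` of `B`. -/
def colProd (A B : Matrix m m ℂ) (i j : m) : m → ℂ := fun k => A k i * B k j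

/-- Membership in the Nomura algebra `N_{A,B}`: every `v_{ij}` is an eigenvector of `M`. -/
def InNomura (A B M : Matrix m m ℂ) : Prop :=
  ∀ i j, ∃ c : ℂ, M.mulVec (colProd A B i j) = c • colProd A B i j

/-- `S = Θ_{A,B}(M)`: the matrix of eigenvalues, i.e. `M v_{ij} = S_{ij} v_{ij}` for all `i,j`. -/
def IsTheta (A B M S : Matrix m m ℂ) : Prop :=
  ∀ i j, M.mulVec (colProd A B i j) = S i j • colProd A B i j

/-- `(A,B)` is a Jones pair: `A` invertible, `B` Schur invertible, and
`X_A Δ_B X_A = Δ_B X_A Δ_B` and `X_A Δ_{Bᵀ} X_A = Δ_{Bᵀ} X_A Δ_{Bᵀ}`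
as operators on matrices. -/
def IsJonesPair (A B : Matrix m m ℂ) : Prop :=
  IsUnit A ∧ (∀ i j, B i j ≠ 0) ∧
  (∀ M : Matrix m m ℂ, A * (B ⊙ (A * M)) = B ⊙ (A * (B ⊙ M))) ∧
  (∀ M : Matrix m m ℂ, A * (Bᵀ ⊙ (A * M)) = Bᵀ ⊙ (A * (Bᵀ ⊙ M)))

/-- An invertible Jones pair: a Jones pair in which moreover `A` is Schur
invertible and `B` is invertible. -/
def IsInvertibleJonesPair (A B : Matrix m m ℂ) : Prop :=
  IsJonesPair A B ∧ (∀ i j, A i j ≠ 0) ∧ IsUnit B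

/-- `W` is a spin model: for some `d` with `d² = n`, `(d⁻¹ W, W^(-))` is an
invertible Jones pair. -/
def IsSpinModel (W : Matrix m m ℂ) : Prop :=
  ∃ d : ℂ, d ^ 2 = (Fintype.card m : ℂ) ∧ IsInvertibleJonesPair (d⁻¹ • W) (sinv W)

/-- Given an invertible Jones pair `(A,B)` with `A` symmetric, `K` is paired with
`H ∈ N_{A,B}` if `Kᵀ ∈ N_{A,Bᵀ}` and `Θ_{A,B}(H) = (Θ_{A,Bᵀ}(Kᵀ))ᵀ`. -/
def Paired (A B H K : Matrix m m ℂ) : Prop :=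
  ∃ S : Matrix m m ℂ, IsTheta A B H S ∧ IsTheta A Bᵀ Kᵀ Sᵀ

/-- The `4n × 4n` matrix with `4 × 4` block structure
`[[P, Q, R, R], [Q, P, R, R], [S, S, T, U], [S, S, U, T]]`. -/
def blockMat {n : ℕ} (P Q R S T U : Matrix (Fin n) (Fin n) ℂ) :
    Matrix (Fin 4 × Fin n) (Fin 4 × Fin n) ℂ :=
  Matrix.of fun x y =>
    (![![P, Q, R, R], ![Q, P, R, R], ![S, S, T, U], ![S, S, U, T]] x.1 y.1) x.2 y.2

/-- Yamada's `4n × 4n` matrix `V` built from `A`, `B` and `d` with `d² = n`. -/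
noncomputable def Vmat {n : ℕ} (A B : Matrix (Fin n) (Fin n) ℂ) (d : ℂ) :
    Matrix (Fin 4 × Fin n) (Fin 4 × Fin n) ℂ :=
  blockMat (d • A) (-(d • A)) (sinv B) (sinv B)ᵀ (d • A) (-(d • A))

theorem theta_iff {n : ℕ} (P Q M S : Matrix (Fin n) (Fin n) ℂ) :
    IsTheta P Q M S ↔ ∀ i j x, ∑ k, M x k * (P k i * Q k j) = S i j * (P x i * Q x j) := by
  constructor
  · intro h i j x
    have := congrFun (h i j) x
    simpa [Matrix.mulVec, dotProduct, colProd] using this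
  · intro h i j
    ext x
    simpa [Matrix.mulVec, dotProduct, colProd] using h i j x

theorem theta_swap {n : ℕ} {P Q M S : Matrix (Fin n) (Fin n) ℂ} (h : IsTheta P Q M S) :
    IsTheta Q P M Sᵀ := by
  rw [theta_iff] at *
  intro i j x
  have := h j i x
  simp only [mul_comm (Q _ i)]
  simpa using this

theorem typeII_left {n : ℕ} (hn : 0 < n) {P : Matrix (Fin n) (Fin n) ℂ} (h : IsTypeII P) :
    (sinv P)ᵀ * P = (n : ℂ) • (1 : Matrix (Fin n) (Fin n) ℂ) := by
  have hn' : (n : ℂ) ≠ 0 := by exact_mod_cast hn.ne'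
  have h2 := h.2
  simp only [Fintype.card_fin] at h2
  have h3 : P * ((n : ℂ)⁻¹ • (sinv P)ᵀ) = 1 := by
    rw [Matrix.mul_smul, h2, smul_smul, inv_mul_cancel₀ hn', one_smul]
  have h4 := mul_eq_one_comm.mp h3
  rw [Matrix.smul_mul] at h4
  rw [← h4, smul_smul, mul_inv_cancel₀ hn', one_smul]

theorem typeII_transpose {n : ℕ} (hn : 0 < n) {P : Matrix (Fin n) (Fin n) ℂ} (h : IsTypeII P) :
    IsTypeII Pᵀ := by
  refine ⟨fun i j => h.1 j i, ?_⟩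
  have := congrArg Matrix.transpose (typeII_left hn h)
  rw [Matrix.transpose_mul, Matrix.transpose_transpose] at this
  have e : (sinv Pᵀ)ᵀ = sinv P := rfl
  rw [e, this]
  simp

theorem theta_transpose {n : ℕ} (hn : 0 < n) {P Q M S : Matrix (Fin n) (Fin n) ℂ}
    (hP : IsTypeII P) (hQ : ∀ i j, Q i j ≠ 0) (h : IsTheta P Q M S) :
    IsTheta (sinv P) (sinv Q) Mᵀ S := by
  have hn' : (n : ℂ) ≠ 0 := by exact_mod_cast hn.ne'
  rw [theta_iff] at *
  intro i j x
  let X : Matrix (Fin n) (Fin n) ℂ := Matrix.of fun k i => P k i * Q k j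
  let Y : Matrix (Fin n) (Fin n) ℂ := Matrix.of fun i k => (n : ℂ)⁻¹ * ((P k i)⁻¹ * (Q k j)⁻¹)
  have h1 : M * X = X * Matrix.diagonal (fun i => S i j) := by
    ext x i
    rw [Matrix.mul_diagonal, Matrix.mul_apply]
    simpa [X, mul_comm] using h i j x
  have h2 : X * Y = 1 := by
    ext a b
    have := congrFun (congrFun hP.2 a) b
    simp only [Matrix.mul_apply, sinv, Matrix.transpose_apply, Matrix.of_apply, Matrix.smul_apply,
      Fintype.card_fin, smul_eq_mul] at this
    have e : (X * Y) a b = (n : ℂ)⁻¹ * (Q a j * (Q b j)⁻¹) * ∑ i, P a i * (P b i)⁻¹ := by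
      rw [Matrix.mul_apply, Finset.mul_sum]
      apply Finset.sum_congr rfl
      intro c _
      simp only [X, Y, Matrix.of_apply]
      ring
    rw [e, this]
    by_cases hab : a = b
    · subst hab
      simp [hQ a j, hn']
    · simp [hab]
  have h3 : Y * X = 1 := mul_eq_one_comm.mp h2
  have h4 : Y * M = Matrix.diagonal (fun i => S i j) * Y := by
    calc Y * M = Y * M * (X * Y) := by rw [h2, mul_one]
      _ = Y * (M * X) * Y := by simp only [mul_assoc]
      _ = (Y * X) * Matrix.diagonal (fun i => S i j) * Y := by rw [h1]; simp only [mul_assoc]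
      _ = _ := by rw [h3, one_mul]
  have h5 := congrFun (congrFun h4 i) x
  rw [Matrix.diagonal_mul, Matrix.mul_apply] at h5
  simp only [Y, Matrix.of_apply] at h5
  simp only [sinv, Matrix.of_apply, Matrix.transpose_apply]
  have h6 : (n : ℂ)⁻¹ * ∑ k, M k x * ((P k i)⁻¹ * (Q k j)⁻¹)
      = (n : ℂ)⁻¹ * (S i j * ((P x i)⁻¹ * (Q x j)⁻¹)) := by
    rw [Finset.mul_sum]
    rw [mul_left_comm, ← h5]
    apply Finset.sum_congr rfl
    intro k _
    ring
  exact mul_left_cancel₀ (inv_ne_zero hn') h6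

theorem theta_schur {n : ℕ} (hn : 0 < n) {P Q R F G S U : Matrix (Fin n) (Fin n) ℂ}
    (hQ : IsTypeII Q) (hF : IsTheta P Q F S) (hG : IsTheta R (sinv Q) G U) :
    IsTheta P R (F ⊙ G) ((n : ℂ)⁻¹ • (S * Uᵀ)) := by
  have hn' : (n : ℂ) ≠ 0 := by exact_mod_cast hn.ne'
  rw [theta_iff] at *
  intro i j x
  let g : Fin n → ℂ := fun k => G x k * R k j
  let r : Fin n → ℂ := fun l => U j l * (R x j * (Q x l)⁻¹)
  have h1 : (sinv Q)ᵀ *ᵥ g = r := by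
    ext l
    have := hG j l x
    simp only [sinv, Matrix.of_apply] at this
    simp only [Matrix.mulVec, dotProduct, sinv, Matrix.transpose_apply, Matrix.of_apply, g, r]
    rw [← this]
    apply Finset.sum_congr rfl
    intro k _
    ring
  have h2 : ∀ k, (n : ℂ) * g k = ∑ l, Q k l * r l := by
    intro k
    have := congrArg (fun v => (Q *ᵥ v) k) h1
    simp only [Matrix.mulVec_mulVec, hQ.2] at this
    simpa [Matrix.smul_mulVec, Matrix.mulVec, dotProduct, Matrix.one_apply] using this
  have h3 : (n : ℂ) * ∑ k, (F ⊙ G) x k * (P k i * R k j)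
      = ∑ l, S i l * U j l * (P x i * R x j) := by
    calc (n : ℂ) * ∑ k, (F ⊙ G) x k * (P k i * R k j)
        = ∑ k, F x k * P k i * ((n : ℂ) * g k) := by
          rw [Finset.mul_sum]
          apply Finset.sum_congr rfl
          intro k _
          simp only [Matrix.hadamard_apply, g]
          ring
      _ = ∑ k, ∑ l, r l * (F x k * (P k i * Q k l)) := by
          apply Finset.sum_congr rfl
          intro k _
          rw [h2, Finset.mul_sum]
          apply Finset.sum_congr rfl
          intro l _
          ring
      _ = ∑ l, r l * ∑ k, F x k * (P k i * Q k l) := by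
          rw [Finset.sum_comm]
          simp only [Finset.mul_sum]
      _ = _ := by
          apply Finset.sum_congr rfl
          intro l _
          rw [hF i l x]
          have := hQ.1 x l
          simp only [r]
          field_simp
  apply mul_left_cancel₀ hn'
  rw [h3, ← Finset.sum_mul, Matrix.smul_apply, Matrix.mul_apply]
  simp only [Matrix.transpose_apply, smul_eq_mul]
  field_simp

theorem jones_theta {n : ℕ} {A B : Matrix (Fin n) (Fin n) ℂ} (hAs : Aᵀ = A)
    (h : ∀ M : Matrix (Fin n) (Fin n) ℂ, A * (B ⊙ (A * M)) = B ⊙ (A * (B ⊙ M))) :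
    IsTheta A B A B := by
  rw [theta_iff]
  intro i j x
  have := congrFun (congrFun (h (Matrix.single i j 1)) x) j
  have e : B ⊙ Matrix.single i j (1 : ℂ) = Matrix.single i j (B i j) := by
    ext a b
    by_cases hab : i = a ∧ j = b
    · obtain ⟨rfl, rfl⟩ := hab
      simp
    · simp [Matrix.single_apply, hab]
  rw [e, Matrix.mul_apply] at this
  simp only [Matrix.hadamard_apply, Matrix.mul_single_apply_same, mul_one] at this
  simp only [mul_comm (A _ i)]
  rw [this]
  ring

theorem jones_typeII {n : ℕ} (hn : 0 < n) {A B : Matrix (Fin n) (Fin n) ℂ}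
    (hA : IsUnit A) (hB : IsUnit B) (hA0 : ∀ i j, A i j ≠ 0) (hB0 : ∀ i j, B i j ≠ 0)
    (h : IsTheta A B A B) :
    IsTypeII A ∧ ∀ x j, ∑ k, B k j = n * A x x := by
  have hn' : (n : ℂ) ≠ 0 := by exact_mod_cast hn.ne'
  rw [theta_iff] at h
  obtain ⟨A', hA1, hA2⟩ : ∃ A', A * A' = 1 ∧ A' * A = 1 := by
    obtain ⟨u, rfl⟩ := hA
    exact ⟨_, u.mul_inv, u.inv_mul⟩
  obtain ⟨B', hB1, hB2⟩ : ∃ A', B * A' = 1 ∧ A' * B = 1 := by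
    obtain ⟨u, rfl⟩ := hB
    exact ⟨_, u.mul_inv, u.inv_mul⟩
  have hw : ∀ x j, ∑ k, (A x k * A' k x) * B k j = A x x := by
    intro x j
    have e1 : ∑ i, (∑ k, A x k * (A k i * B k j)) * A' i x = A x x * B x j := by
      calc ∑ i, (∑ k, A x k * (A k i * B k j)) * A' i x
          = ∑ k, A x k * B k j * (A * A') k x := by
            simp only [Matrix.mul_apply, Finset.sum_mul, Finset.mul_sum]
            rw [Finset.sum_comm]
            apply Finset.sum_congr rfl; intro k _
            apply Finset.sum_congr rfl; intro l _
            ring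
        _ = _ := by simp [hA1, Matrix.one_apply]
    apply mul_right_cancel₀ (hB0 x j)
    rw [← e1, Finset.sum_mul]
    apply Finset.sum_congr rfl; intro k _
    rw [h]; ring
  let b : Fin n → ℂ := fun k => ∑ j, B' j k
  have hw2 : ∀ x k, A x k * A' k x = A x x * b k := by
    intro x k
    have e1 : (fun k => A x k * A' k x) ᵥ* B = fun _ => A x x := by
      ext j
      exact hw x j
    have e2 := congrArg (fun v => (v ᵥ* B') k) e1
    simp only [Matrix.vecMul_vecMul, hB1, Matrix.vecMul_one] at e2
    rw [e2]
    simp [Matrix.vecMul, dotProduct, b, Finset.mul_sum]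
  have hs : ∀ x, A x x * ∑ k, b k = 1 := by
    intro x
    rw [Finset.mul_sum]
    simp only [← hw2]
    have := congrFun (congrFun hA1 x) x
    rw [Matrix.mul_apply] at this
    simpa using this
  have hs0 : ∑ k, b k ≠ 0 := right_ne_zero_of_mul_eq_one (hs ⟨0, hn⟩)
  have hxx : ∀ x, A x x = (∑ k, b k)⁻¹ := fun x => eq_inv_of_mul_eq_one_left (hs x)
  have hw3 : ∀ x k, A x k * A' k x = (n : ℂ)⁻¹ := by
    intro x k
    have := congrFun (congrFun hA2 k) k
    rw [Matrix.mul_apply] at this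
    simp only [mul_comm (A' _ _), hw2, hxx, Finset.sum_const, Finset.card_univ, Fintype.card_fin,
      nsmul_eq_mul, Matrix.one_apply_eq] at this
    rw [hw2, hxx]
    exact eq_inv_of_mul_eq_one_right this
  have hinv : (sinv A)ᵀ = (n : ℂ) • A' := by
    ext k x
    have := hw3 x k
    have h0 := hA0 x k
    simp only [sinv, Matrix.transpose_apply, Matrix.of_apply, Matrix.smul_apply, smul_eq_mul]
    field_simp at this ⊢
    rw [← this]
  refine ⟨⟨hA0, ?_⟩, ?_⟩
  · rw [hinv, Matrix.mul_smul, hA1]; simp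
  · intro x j
    have := hw x j
    simp only [hw3, ← Finset.mul_sum] at this
    rw [← this]
    field_simp

theorem theta_inv {n : ℕ} (hn : 0 < n) {A B : Matrix (Fin n) (Fin n) ℂ} (hAs : Aᵀ = A)
    (hB0 : ∀ i j, B i j ≠ 0) (hA : IsTypeII A) (h : IsTheta A B A B) :
    IsTheta A B (sinv A) ((n : ℂ) • sinv B) := by
  have e : sinv A * A = (n : ℂ) • (1 : Matrix (Fin n) (Fin n) ℂ) := by
    rw [← typeII_left hn hA]
    congr 1
    conv_lhs => rw [← hAs]
    rfl
  intro i j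
  have h1 := congrArg (fun v => sinv A *ᵥ v) (h i j)
  simp only [Matrix.mulVec_mulVec, e, Matrix.mulVec_smul, Matrix.smul_mulVec,
    Matrix.one_mulVec] at h1
  simp only [Matrix.smul_apply, sinv, Matrix.of_apply, smul_eq_mul]
  rw [mul_comm, mul_smul, h1, smul_smul, inv_mul_cancel₀ (hB0 i j), one_smul]
  rfl

theorem jones_typeII_B {n : ℕ} (hn : 0 < n) {A B : Matrix (Fin n) (Fin n) ℂ} (hAs : Aᵀ = A)
    (hB0 : ∀ i j, B i j ≠ 0) (hA : IsTypeII A) (h : IsTheta A B A B)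
    (hrow : ∀ x j, ∑ k, B j k = n * A x x) : IsTypeII B := by
  have hn' : (n : ℂ) ≠ 0 := by exact_mod_cast hn.ne'
  refine ⟨hB0, ?_⟩
  have h1 := theta_inv hn hAs hB0 hA h
  rw [theta_iff] at h1
  ext x i
  have hsym : ∀ a b, A a b = A b a := fun a b => congrFun (congrFun hAs b) a
  have e1 := congrFun (congrFun (typeII_left hn hA) x) i
  have e2 : ∑ l, ∑ y, sinv A x y * (A y i * B y l)
      = (n : ℂ) * A x x * ∑ y, (sinv A)ᵀ x y * A y i := by
    rw [Finset.sum_comm, Finset.mul_sum]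
    apply Finset.sum_congr rfl; intro y _
    rw [← hrow x y, Finset.sum_mul]
    apply Finset.sum_congr rfl; intro l _
    simp only [sinv, Matrix.transpose_apply, Matrix.of_apply, hsym x y]
    ring
  simp only [h1] at e2
  rw [← Matrix.mul_apply, e1] at e2
  have e3 : (n : ℂ) * A x i * (B * (sinv B)ᵀ) x i = n * A x x *
      ((n : ℂ) • (1 : Matrix (Fin n) (Fin n) ℂ)) x i := by
    rw [← e2, Matrix.mul_apply, Finset.mul_sum]
    apply Finset.sum_congr rfl; intro l _
    simp only [sinv, Matrix.transpose_apply, Matrix.of_apply, Matrix.smul_apply, smul_eq_mul]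
    ring
  apply mul_left_cancel₀ (mul_ne_zero hn' (hA.1 x i))
  rw [e3]
  by_cases hxi : x = i
  · subst hxi; simp
  · simp [hxi]

/-- All facts about the Jones pair that are used. -/
theorem paired_main {n : ℕ} (hn : 0 < n) (A B H K : Matrix (Fin n) (Fin n) ℂ)
    (h : IsInvertibleJonesPair A B) (hAs : Aᵀ = A) (hp : Paired A B H K) :
    Paired A B Hᵀ Kᵀ ∧ ∃ S : Matrix (Fin n) (Fin n) ℂ,
        IsTheta A (sinv A) (H ⊙ A) S ∧ IsTheta Bᵀ (sinv Bᵀ) (Kᵀ ⊙ A) S := by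
  have hn' : (n : ℂ) ≠ 0 := by exact_mod_cast hn.ne'
  obtain ⟨⟨hAu, hB0, hJ1, hJ2⟩, hA0, hBu⟩ := h
  have hBt0 : ∀ i j, Bᵀ i j ≠ 0 := fun i j => hB0 j i
  have t1 := jones_theta hAs hJ1
  have t2 := jones_theta hAs hJ2
  have hBtu : IsUnit Bᵀ := by
    rw [Matrix.isUnit_iff_isUnit_det, Matrix.det_transpose, ← Matrix.isUnit_iff_isUnit_det]
    exact hBu
  obtain ⟨hA, -⟩ := jones_typeII hn hAu hBu hA0 hB0 t1
  obtain ⟨-, hrow⟩ := jones_typeII hn hAu hBtu hA0 hBt0 t2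
  have hB : IsTypeII B := jones_typeII_B hn hAs hB0 hA t1 hrow
  have hBt := typeII_transpose hn hB
  have i1 := theta_inv hn hAs hB0 hA t1
  have i2 := theta_inv hn hAs hBt0 hA t2
  have s1 := theta_transpose hn hA hB0 t1
  have s2 := theta_transpose hn hA hBt0 t2
  rw [hAs] at s1 s2
  have hss : ∀ P : Matrix (Fin n) (Fin n) ℂ, sinv (sinv P) = P := by
    intro P; ext i j; simp [sinv]
  obtain ⟨S, hH, hK⟩ := hp
  have T1 := theta_schur hn hB hH s1
  have T2 := theta_schur hn hA (theta_swap hK) (theta_swap s2)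
  simp only [Matrix.transpose_transpose] at T1 T2
  set T := (n : ℂ)⁻¹ • (S * Bᵀ) with hT
  refine ⟨?_, T, T1, T2⟩
  have hsA0 : ∀ i j, sinv A i j ≠ 0 := fun i j => inv_ne_zero (hA0 i j)
  have hsB0 : ∀ i j, sinv Bᵀ i j ≠ 0 := fun i j => inv_ne_zero (hBt0 i j)
  have U1 := theta_swap (theta_transpose hn hA hsA0 T1)
  have U2 := theta_swap (theta_transpose hn hBt hsB0 T2)
  rw [hss] at U1 U2
  have V1 := theta_swap (theta_schur hn hA (theta_swap i1) U1)
  have V2 := theta_schur hn hBt i2 U2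
  have q : ∀ M : Matrix (Fin n) (Fin n) ℂ, sinv A ⊙ (M ⊙ A)ᵀ = Mᵀ := by
    intro M
    ext x k
    have hsym : A x k = A k x := congrFun (congrFun hAs k) x
    have := hA0 k x
    simp only [sinv, Matrix.hadamard_apply, Matrix.of_apply, Matrix.transpose_apply, hsym]
    field_simp
  rw [q] at V1 V2
  refine ⟨_, V1, ?_⟩
  convert V2 using 1
  simp only [Matrix.transpose_transpose]
  have e : (sinv B)ᵀ = sinv Bᵀ := rfl
  rw [Matrix.transpose_smul, e]

theorem paired_transpose_and_theta {n : ℕ} (hn : 0 < n)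
    (A B H K : Matrix (Fin n) (Fin n) ℂ)
    (h : IsInvertibleJonesPair A B) (hAs : Aᵀ = A) (hH : InNomura A B H) :
    (Paired A B H K ↔ Paired A B Hᵀ Kᵀ) ∧
    (Paired A B H K →
      InNomura A (sinv A) (H ⊙ A) ∧
      InNomura Bᵀ (sinv Bᵀ) (Kᵀ ⊙ A) ∧
      ∃ S : Matrix (Fin n) (Fin n) ℂ,
        IsTheta A (sinv A) (H ⊙ A) S ∧ IsTheta Bᵀ (sinv Bᵀ) (Kᵀ ⊙ A) S) := by
  refine ⟨⟨fun hp => (paired_main hn A B H K h hAs hp).1, fun hp => ?_⟩, fun hp => ?_⟩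
  · simpa using (paired_main hn A B _ _ h hAs hp).1
  · obtain ⟨S, h1, h2⟩ := (paired_main hn A B H K h hAs hp).2
    exact ⟨fun i j => ⟨_, h1 i j⟩, fun i j => ⟨_, h2 i j⟩, S, h1, h2⟩
end

section
/- Let (A,B) be an invertible Jones pair of n×n complex matrices with A symmetric. Let F, F₁ ∈ N_A, let G, G₁, H, H₁ ∈ N_{A,B}, and let K, K₁ be paired with H, H₁ respectively. Then H∘H₁ ∈ N_A, and the Schur product M(F,G,H)∘M(F₁,G₁,H₁) equals M(F', G', H'), where F' = FF₁ + n^{-1}·Θ_A(H∘H₁)ᵀ ∈ N_A, G' = GG₁ ∈ N_{A,B}, H' = Θ_A(F)∘H₁ + Θ_A(F₁)∘H ∈ N_{A,B}, and the matrix K' = Θ_{B^(-)}(F)∘K₁ + Θ_{B^(-)}(F₁)∘K is paired with H' (and is the K-block of M(F',G',H')). -/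
open Matrix

variable {m : Type*} [Fintype m] [DecidableEq m]

section Helpers

variable {n : ℕ}

lemma isTheta_iff (A B M S : Matrix m m ℂ) : IsTheta A B M S ↔
    ∀ i j k, ∑ l, M k l * (A l i * B l j) = S i j * (A k i * B k j) := by
  unfold IsTheta
  refine forall_congr' fun i => forall_congr' fun j => ?_
  rw [funext_iff]
  rfl

lemma isTheta_mul {A B M S M' S' : Matrix m m ℂ} (h : IsTheta A B M S) (h' : IsTheta A B M' S') :
    IsTheta A B (M * M') (S ⊙ S') := by
  intro i j
  rw [← Matrix.mulVec_mulVec, h' i j, Matrix.mulVec_smul, h i j, smul_smul, mul_comm]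
  rfl

lemma isTheta_add {A B M S M' S' : Matrix m m ℂ} (h : IsTheta A B M S) (h' : IsTheta A B M' S') :
    IsTheta A B (M + M') (S + S') := by
  intro i j
  rw [Matrix.add_mulVec, h i j, h' i j, ← add_smul]
  rfl

lemma isTheta_smul {A B M S : Matrix m m ℂ} (c : ℂ) (h : IsTheta A B M S) :
    IsTheta A B (c • M) (c • S) := by
  intro i j
  rw [Matrix.smul_mulVec, h i j, smul_smul]
  rfl

lemma isTheta_unique {A B M M' S : Matrix m m ℂ} [Nonempty m] (hA : IsUnit A)
    (hB : ∀ i j, B i j ≠ 0) (h : IsTheta A B M S) (h' : IsTheta A B M' S) : M = M' := by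
  obtain ⟨j⟩ := ‹Nonempty m›
  have hD : IsUnit (Matrix.diagonal (fun k => B k j)) := by
    rw [Matrix.isUnit_iff_isUnit_det, Matrix.det_diagonal, isUnit_iff_ne_zero]
    exact Finset.prod_ne_zero_iff.2 fun k _ => hB k j
  have key : M * (Matrix.diagonal (fun k => B k j) * A)
      = M' * (Matrix.diagonal (fun k => B k j) * A) := by
    ext k i
    have h1 := (isTheta_iff _ _ _ _).1 h i j k
    have h2 := (isTheta_iff _ _ _ _).1 h' i j k
    simp only [Matrix.mul_apply (M := M), Matrix.mul_apply (M := M'), Matrix.diagonal_mul]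
    simp only [mul_comm (B _ j)]
    rw [h1, h2]
  exact (hD.mul hA).mul_right_cancel key

/-- The facts used about a symmetric invertible Jones pair. -/
structure Good (A B : Matrix (Fin n) (Fin n) ℂ) : Prop where
  sym : ∀ i j, A i j = A j i
  nzA : ∀ i j, A i j ≠ 0
  nzB : ∀ i j, B i j ≠ 0
  uA : IsUnit A
  uB : IsUnit B
  tA : ∀ i j, ∑ k, A i k / A j k = if i = j then (n : ℂ) else 0
  tB : ∀ i j, ∑ k, B i k / B j k = if i = j then (n : ℂ) else 0
  th : IsTheta A B A B

lemma theta_of_jones {A B : Matrix (Fin n) (Fin n) ℂ} (hA : Aᵀ = A)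
    (h : ∀ M : Matrix (Fin n) (Fin n) ℂ, A * (B ⊙ (A * M)) = B ⊙ (A * (B ⊙ M))) :
    IsTheta A B A B := by
  rw [isTheta_iff]
  intro i j k
  have h1 := congrFun (congrFun (h (Matrix.single i j 1)) k) j
  simp only [Matrix.mul_apply, Matrix.hadamard_apply, Matrix.single_apply] at h1
  simp only [mul_ite, mul_one, mul_zero, and_true, Finset.sum_ite_eq, Finset.mem_univ,
    if_true] at h1
  simp only [mul_comm (A _ i)]
  rw [h1]; ring

/-- Sums of `A ∘ A⁻ᵀ` against `B`. -/
lemma aux_sum {A B : Matrix (Fin n) (Fin n) ℂ} (hu : IsUnit A) (nzB : ∀ i j, B i j ≠ 0)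
    (sym : ∀ i j, A i j = A j i)
    (h : IsTheta A B A B) (i l j : Fin n) :
    ∑ k, A i k * A⁻¹ k l * B k j = A i l * B l j / B i j := by
  have hdet : IsUnit A.det := (Matrix.isUnit_iff_isUnit_det A).1 hu
  rw [isTheta_iff] at h
  have e : A * Matrix.diagonal (fun k => B k j) * A
      = Matrix.diagonal (fun k => B k j) * A * Matrix.diagonal (fun k => B k j) := by
    ext a b
    rw [Matrix.mul_diagonal, Matrix.diagonal_mul, Matrix.mul_apply]
    simp only [Matrix.mul_diagonal]
    have := h b j a
    rw [← mul_comm (A a b * B a j)] at this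
    calc _ = ∑ l, A a l * (A l b * B l j) := Finset.sum_congr rfl fun _ _ => by ring
      _ = _ := by rw [this]; ring
  have e2 : (A * Matrix.diagonal (fun k => B k j) * A⁻¹) 
      = Matrix.diagonal (fun k => (B k j)⁻¹) * A * Matrix.diagonal (fun k => B k j) := by
    have hd : Matrix.diagonal (fun k => (B k j)⁻¹) * Matrix.diagonal (fun k => B k j) = 1 := by
      rw [Matrix.diagonal_mul_diagonal]
      simp [nzB]
    have hAA : A * A⁻¹ = 1 := Matrix.mul_nonsing_inv A hdet
    set D := Matrix.diagonal (fun k => B k j)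
    set E := Matrix.diagonal (fun k => (B k j)⁻¹)
    calc A * D * A⁻¹ = (E * D) * A * D * A⁻¹ := by rw [hd, Matrix.one_mul]
      _ = E * (D * A * D) * A⁻¹ := by simp only [Matrix.mul_assoc]
      _ = E * (A * D * A) * A⁻¹ := by rw [e]
      _ = E * A * D * (A * A⁻¹) := by simp only [Matrix.mul_assoc]
      _ = _ := by rw [hAA, Matrix.mul_one]
  have e3 := congrFun (congrFun e2 i) l
  rw [Matrix.mul_diagonal, Matrix.diagonal_mul, Matrix.mul_apply] at e3
  simp only [Matrix.mul_diagonal] at e3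
  calc _ = ∑ k, A i k * B k j * A⁻¹ k l := Finset.sum_congr rfl fun _ _ => by ring
    _ = _ := by rw [e3]; ring

lemma aux_inv {A B : Matrix (Fin n) (Fin n) ℂ} (hn : 0 < n) (hu : IsUnit A) (huB : IsUnit B)
    (nzA : ∀ i j, A i j ≠ 0)
    (nzB : ∀ i j, B i j ≠ 0) (sym : ∀ i j, A i j = A j i) (h : IsTheta A B A B) :
    (∀ i k, A i k * A⁻¹ k i = (n : ℂ)⁻¹) ∧ ∃ c : ℂ, ∀ j, ∑ k, B k j = c := by
  have hdet : IsUnit A.det := (Matrix.isUnit_iff_isUnit_det A).1 hu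
  have hdetB : IsUnit B.det := (Matrix.isUnit_iff_isUnit_det B).1 huB
  have hBB : B * B⁻¹ = 1 := Matrix.mul_nonsing_inv B hdetB
  have hAA : A * A⁻¹ = 1 := Matrix.mul_nonsing_inv A hdet
  have hn0 : (n : ℂ) ≠ 0 := by exact_mod_cast hn.ne'
  have s0 : ∀ i j, ∑ k, A i k * A⁻¹ k i * B k j = A i i := fun i j => by
    rw [aux_sum hu nzB sym h i i j, mul_div_assoc, div_self (nzB i j), mul_one]
  set W : Matrix (Fin n) (Fin n) ℂ := Matrix.of fun i k => A i k * A⁻¹ k i with hW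
  let c : Fin n → ℂ := fun k => ∑ j, B⁻¹ j k
  have s1 : ∀ i k, A i k * A⁻¹ k i = A i i * c k := by
    intro i k
    have hWB : W * B = Matrix.of fun i _ => A i i := by
      ext a b
      simp only [Matrix.mul_apply, hW, Matrix.of_apply]
      exact s0 a b
    have : W = (Matrix.of fun i _ => A i i) * B⁻¹ := by
      rw [← hWB, Matrix.mul_assoc, hBB, Matrix.mul_one]
    have := congrFun (congrFun this i) k
    simp only [Matrix.mul_apply, hW, Matrix.of_apply, ← Finset.mul_sum] at this
    exact this
  have s2 : ∀ i, A i i * ∑ k, c k = 1 := by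
    intro i
    rw [Finset.mul_sum]
    simp only [← s1]
    have := congrFun (congrFun hAA i) i
    simpa [Matrix.mul_apply] using this
  have hAT : Aᵀ = A := by ext i j; exact sym j i
  have symI : ∀ i j, A⁻¹ i j = A⁻¹ j i := by
    intro i j
    have : (A⁻¹)ᵀ = A⁻¹ := by rw [Matrix.transpose_nonsing_inv, hAT]
    exact congrFun (congrFun this j) i
  have hc : ∑ k, c k ≠ 0 := by
    intro h0
    have := s2 ⟨0, hn⟩
    rw [h0] at this; simp at this
  have s3 : ∀ i, A i i = (∑ k, c k)⁻¹ := fun i => eq_inv_of_mul_eq_one_left (s2 i)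
  have s4 : ∀ i k, c k = c i := by
    intro i k
    have e1 := s1 i k
    have e2 := s1 k i
    rw [sym i k, symI k i, e2, s3, s3] at e1
    exact (mul_left_cancel₀ (inv_ne_zero hc) e1).symm
  have s5 : ∀ i k, A i k * A⁻¹ k i = (n : ℂ)⁻¹ := by
    intro i k
    rw [s1, s3]
    have : ∑ k', c k' = n * c k := by
      rw [Finset.sum_congr rfl fun x _ => s4 k x]; simp
    rw [this] at hc ⊢
    have := right_ne_zero_of_mul hc
    field_simp
  refine ⟨s5, n * (∑ k, c k)⁻¹, fun j => ?_⟩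
  have := s0 j j
  simp only [s5, ← Finset.mul_sum, s3] at this
  rw [← this]; field_simp

lemma good_of {A B : Matrix (Fin n) (Fin n) ℂ} (hn : 0 < n)
    (h : IsInvertibleJonesPair A B) (hA : Aᵀ = A) : Good A B ∧ Good A Bᵀ := by
  obtain ⟨⟨uA, nzB, j1, j2⟩, nzA, uB⟩ := h
  have sym : ∀ i j, A i j = A j i := fun i j => congrFun (congrFun hA j) i
  have uBT : IsUnit Bᵀ := (Matrix.isUnit_transpose _).2 uB
  have nzBT : ∀ i j, Bᵀ i j ≠ 0 := fun i j => nzB j i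
  have t1 := theta_of_jones hA j1
  have t2 := theta_of_jones hA j2
  obtain ⟨i1, c1, hc1⟩ := aux_inv hn uA uB nzA nzB sym t1
  obtain ⟨i2, c2, hc2⟩ := aux_inv hn uA uBT nzA nzBT sym t2
  have hn0 : (n : ℂ) ≠ 0 := by exact_mod_cast hn.ne'
  have hdet : IsUnit A.det := (Matrix.isUnit_iff_isUnit_det A).1 uA
  have hAA : A * A⁻¹ = 1 := Matrix.mul_nonsing_inv A hdet
  have inv' : ∀ k j, A⁻¹ k j = (n : ℂ)⁻¹ / A j k := fun k j => by
    rw [← i1 j k]; field_simp [nzA j k]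
  have tA : ∀ i j, ∑ k, A i k / A j k = if i = j then (n : ℂ) else 0 := by
    intro i j
    have := congrFun (congrFun hAA i) j
    rw [Matrix.mul_apply, Matrix.one_apply] at this
    simp only [inv'] at this
    calc _ = n * ∑ k, A i k * ((n : ℂ)⁻¹ / A j k) := by
            rw [Finset.mul_sum]
            refine Finset.sum_congr rfl fun k _ => ?_
            have := nzA j k
            field_simp
      _ = _ := by rw [this]; simp
  have tG : ∀ B : Matrix (Fin n) (Fin n) ℂ, (∀ i j, B i j ≠ 0) → IsTheta A B A B →
      (∃ c : ℂ, ∀ j, ∑ k, B j k = c) →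
      ∀ i j, ∑ k, B i k / B j k = if i = j then (n : ℂ) else 0 := by
    rintro B nzB t ⟨c, hc⟩ l i
    split_ifs with hil
    · subst hil; simp [nzB]
    · have e : A i l * ∑ j, B l j / B i j = 0 := by
        calc _ = ∑ j, ∑ k, A i k * A⁻¹ k l * B k j := by
                rw [Finset.mul_sum]
                refine Finset.sum_congr rfl fun j _ => ?_
                rw [aux_sum uA nzB sym t]; ring
          _ = ∑ k, A i k * A⁻¹ k l * c := by
                rw [Finset.sum_comm]
                refine Finset.sum_congr rfl fun k _ => ?_
                rw [← Finset.mul_sum, hc]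
          _ = (A * A⁻¹) i l * c := by rw [Matrix.mul_apply, Finset.sum_mul]
          _ = 0 := by rw [hAA, Matrix.one_apply_ne (Ne.symm hil), zero_mul]
      exact (mul_eq_zero.1 e).resolve_left (nzA i l)
  exact ⟨⟨sym, nzA, nzB, uA, uB, tA, tG B nzB t1 ⟨c2, hc2⟩, t1⟩,
    ⟨sym, nzA, nzBT, uA, uBT, tA, tG Bᵀ nzBT t2 ⟨c1, hc1⟩, t2⟩⟩

variable {A B : Matrix (Fin n) (Fin n) ℂ}

lemma Good.tAc (g : Good A B) (i j : Fin n) :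
    ∑ k, A k i / A k j = if i = j then (n : ℂ) else 0 := by
  rw [← g.tA i j]
  exact Finset.sum_congr rfl fun k _ => by rw [g.sym k i, g.sym k j]

lemma isThetaN_iff (A M S : Matrix (Fin n) (Fin n) ℂ) : IsTheta A (sinv A) M S ↔
    ∀ i j k, ∑ l, M k l * (A l i / A l j) = S i j * (A k i / A k j) := by
  rw [isTheta_iff]; rfl

lemma Good.dual (g : Good A B) {M S : Matrix (Fin n) (Fin n) ℂ}
    (h : IsTheta A (sinv A) M S) : IsTheta A (sinv A) S ((n : ℂ) • Mᵀ) := by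
  rw [isThetaN_iff] at h ⊢
  intro k l i
  have e : ∀ j, S i j * (A j k / A j l)
      = ∑ r, M l r * (A r i / A l i) * (A k j / A r j) := by
    intro j
    have := h i j l
    have n1 := g.nzA l i
    have n2 := g.nzA l j
    have e2 : S i j = (∑ r, M l r * (A r i / A r j)) * (A l j / A l i) := by
      rw [this]; field_simp
    rw [e2, Finset.sum_mul, Finset.sum_mul, g.sym j k, g.sym j l]
    refine Finset.sum_congr rfl fun r _ => ?_
    have n3 := g.nzA r j
    field_simp
  simp only [e]
  rw [Finset.sum_comm]
  simp only [← Finset.mul_sum, g.tA]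
  simp only [mul_ite, mul_zero, Finset.sum_ite_eq, Finset.mem_univ, if_true, Matrix.smul_apply,
    Matrix.transpose_apply, smul_eq_mul]
  rw [g.sym k i, g.sym l i]; ring

lemma Good.trans (g : Good A B) (hn : 0 < n) {M S : Matrix (Fin n) (Fin n) ℂ}
    (h : IsTheta A (sinv A) M S) : IsTheta A (sinv A) Mᵀ Sᵀ := by
  have hn0 : (n : ℂ) ≠ 0 := by exact_mod_cast hn.ne'
  have := isTheta_smul (n : ℂ)⁻¹ (g.dual (g.dual h))
  simpa [smul_smul, hn0] using this

lemma Good.nzsA (g : Good A B) : ∀ i j, sinv A i j ≠ 0 := fun i j => inv_ne_zero (g.nzA i j)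

lemma Good.comm (g : Good A B) (hn : 0 < n) {M S M' S' : Matrix (Fin n) (Fin n) ℂ}
    (h : IsTheta A (sinv A) M S) (h' : IsTheta A (sinv A) M' S') : M * M' = M' * M := by
  have : Nonempty (Fin n) := ⟨⟨0, hn⟩⟩
  refine isTheta_unique g.uA g.nzsA (isTheta_mul h h') ?_
  have := isTheta_mul h' h
  rwa [Matrix.hadamard_comm] at this

/-- `Sᵀ a_{ik} = n H_{ik} b_{ki}`. -/
lemma Good.star1 (g : Good A B) {H S : Matrix (Fin n) (Fin n) ℂ} :
    IsTheta A B H S ↔ ∀ i k j, ∑ l, S l j * (A l i / A l k)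
      = (n : ℂ) * H i k * (B k j / B i j) := by
  rw [isTheta_iff]
  constructor
  · intro h i k j
    have e : ∀ l, S l j * (A l i / A l k)
        = ∑ r, H i r * (B r j / B i j) * (A r l / A k l) := by
      intro l
      have n1 := g.nzA i l
      have n2 := g.nzB i j
      have n3 := g.nzA k l
      have e2 : S l j = (∑ r, H i r * (A r l * B r j)) / (A i l * B i j) := by
        rw [h l j i]; field_simp
      rw [e2, Finset.sum_div, Finset.sum_mul, g.sym l i, g.sym l k]
      refine Finset.sum_congr rfl fun r _ => ?_
      field_simp
    simp only [e]
    rw [Finset.sum_comm]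
    simp only [← Finset.mul_sum, g.tA]
    simp only [mul_ite, mul_zero, Finset.sum_ite_eq', Finset.mem_univ, if_true]
    ring
  · intro h l j i
    have hn0 : (n : ℂ) ≠ 0 := by
      have : 0 < n := Nat.pos_of_ne_zero (by rintro rfl; exact l.elim0)
      exact_mod_cast this.ne'
    have e : ∀ k, H i k * (A k l * B k j)
        = ∑ r, (n : ℂ)⁻¹ * S r j * A r i * B i j * (A k l / A k r) := by
      intro k
      have n1 := g.nzB i j
      have n2 := g.nzB k j
      have e2 : H i k = (n : ℂ)⁻¹ * (∑ l, S l j * (A l i / A l k)) * (B i j / B k j) := by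
        rw [h i k j]; field_simp
      rw [e2, Finset.mul_sum, Finset.sum_mul, Finset.sum_mul]
      refine Finset.sum_congr rfl fun r _ => ?_
      have n3 := g.nzA k r
      rw [g.sym r k]
      field_simp
    simp only [e]
    rw [Finset.sum_comm]
    simp only [← Finset.mul_sum, g.tAc]
    simp only [mul_ite, mul_zero, Finset.sum_ite_eq, Finset.mem_univ, if_true]
    rw [g.sym l i]
    field_simp

/-- `S b_{ik} = n H_{ik} a_{ki}`. -/
lemma Good.star2 (g : Good A B) {H S : Matrix (Fin n) (Fin n) ℂ}
    (h : IsTheta A B H S) (i k l : Fin n) : ∑ j, S l j * (B i j / B k j)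
      = (n : ℂ) * H i k * (A l k / A l i) := by
  rw [isTheta_iff] at h
  have e : ∀ j, S l j * (B i j / B k j)
      = ∑ r, H i r * (A r l / A i l) * (B r j / B k j) := by
    intro j
    have n1 := g.nzA i l
    have n2 := g.nzB i j
    have n3 := g.nzB k j
    have e2 : S l j = (∑ r, H i r * (A r l * B r j)) / (A i l * B i j) := by
      rw [h l j i]; field_simp
    rw [e2, Finset.sum_div, Finset.sum_mul]
    refine Finset.sum_congr rfl fun r _ => ?_
    field_simp
  simp only [e]
  rw [Finset.sum_comm]
  simp only [← Finset.mul_sum, g.tB]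
  simp only [mul_ite, mul_zero, Finset.sum_ite_eq', Finset.mem_univ, if_true]
  rw [g.sym l k, g.sym l i]; ring

/-- `b_{ik}`: quotient of rows of `B`, in the order used by `Θ_{(Bᵀ)^(-)}`. -/
lemma star1v (g : Good A B) {H S : Matrix (Fin n) (Fin n) ℂ} :
    IsTheta A B H S ↔ ∀ i k, Sᵀ.mulVec (colProd A (sinv A) i k)
      = ((n : ℂ) * H i k) • colProd (sinv Bᵀ) (sinv (sinv Bᵀ)) i k := by
  rw [g.star1]
  refine forall_congr' fun i => forall_congr' fun k => ?_
  rw [funext_iff]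
  refine forall_congr' fun j => ?_
  simp only [Matrix.mulVec, dotProduct, colProd, sinv, Matrix.of_apply, Matrix.transpose_apply,
    Pi.smul_apply, smul_eq_mul, inv_inv, div_eq_mul_inv, mul_comm (B i j)⁻¹]

lemma star2v (g : Good A B) {H S : Matrix (Fin n) (Fin n) ℂ}
    (h : IsTheta A B H S) (i k : Fin n) :
    S.mulVec (colProd (sinv Bᵀ) (sinv (sinv Bᵀ)) i k)
      = ((n : ℂ) * H k i) • colProd A (sinv A) i k := by
  funext l
  have := g.star2 h k i l
  simp only [Matrix.mulVec, dotProduct, colProd, sinv, Matrix.of_apply, Matrix.transpose_apply,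
    Pi.smul_apply, smul_eq_mul, inv_inv, div_eq_mul_inv, mul_comm (B i _)⁻¹] at this ⊢
  exact this

/-- `B Bᵀ ∈ N_A`. -/
lemma Good.bbt (g : Good A B) :
    IsTheta A (sinv A) (B * Bᵀ) ((n : ℂ) ^ 2 • (A ⊙ A)) := by
  intro i k
  rw [← Matrix.mulVec_mulVec, (star1v g).1 g.th, Matrix.mulVec_smul, star2v g g.th, smul_smul,
    g.sym k i]
  congr 1
  simp only [Matrix.smul_apply, Matrix.hadamard_apply, smul_eq_mul]; ring

lemma Good.ofX (g : Good A B) {X Y : Matrix (Fin n) (Fin n) ℂ} (h : IsTheta A (sinv A) X Y) :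
    IsTheta A B (A ⊙ Y) (Xᵀ * B) := by
  rw [star1v g]
  intro i k
  rw [Matrix.transpose_mul, Matrix.transpose_transpose, ← Matrix.mulVec_mulVec, h i k,
    Matrix.mulVec_smul, (star1v g).1 g.th, smul_smul]
  congr 1
  simp only [Matrix.hadamard_apply]; ring

lemma Good.toX (g : Good A B) {H S : Matrix (Fin n) (Fin n) ℂ} (h : IsTheta A B H S) :
    ∃ X Y, IsTheta A (sinv A) X Y ∧ H = A ⊙ Y ∧ S = Xᵀ * B := by
  have hdetB : IsUnit B.det := (Matrix.isUnit_iff_isUnit_det B).1 g.uB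
  have hBB : B⁻¹ * B = 1 := Matrix.nonsing_inv_mul B hdetB
  have hBB' : B * B⁻¹ = 1 := Matrix.mul_nonsing_inv B hdetB
  refine ⟨(S * B⁻¹)ᵀ, Matrix.of fun i j => H i j / A i j, ?_, ?_, ?_⟩
  · intro i k
    have e1 := (star1v g).1 h i k
    have e2 := (star1v g).1 g.th i k
    have e3 : Sᵀ.mulVec (colProd A (sinv A) i k)
        = (H i k / A i k) • Bᵀ.mulVec (colProd A (sinv A) i k) := by
      rw [e1, e2, smul_smul]
      congr 1
      have := g.nzA i k
      field_simp
    rw [Matrix.transpose_mul, ← Matrix.mulVec_mulVec, e3, Matrix.mulVec_smul,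
      Matrix.mulVec_mulVec, ← Matrix.transpose_mul, hBB', Matrix.transpose_one,
      Matrix.one_mulVec]
    rfl
  · ext i j
    have := g.nzA i j
    simp only [Matrix.hadamard_apply, Matrix.of_apply]
    field_simp
  · rw [Matrix.transpose_transpose, Matrix.mul_assoc, hBB, Matrix.mul_one]

/-- Conjugation by `B` takes `N_A` to `N_{B^(-)}`. -/
lemma Good.conj (g : Good A Bᵀ) (hn : 0 < n) {X Y W : Matrix (Fin n) (Fin n) ℂ}
    (hW : B * X = W * B) :
    IsTheta A (sinv A) X Y ↔ IsTheta (sinv B) (sinv (sinv B)) W Y := by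
  have hn0 : (n : ℂ) ≠ 0 := by exact_mod_cast hn.ne'
  have uB : IsUnit B := (Matrix.isUnit_transpose _).1 g.uB
  have hdetB : IsUnit B.det := (Matrix.isUnit_iff_isUnit_det B).1 uB
  have hBB : B⁻¹ * B = 1 := Matrix.nonsing_inv_mul B hdetB
  have e := (star1v g).1 g.th
  simp only [Matrix.transpose_transpose] at e
  refine forall_congr' fun i => forall_congr' fun k => ?_
  have hc : (n : ℂ) * A i k ≠ 0 := mul_ne_zero hn0 (g.nzA i k)
  have eW : B.mulVec (X.mulVec (colProd A (sinv A) i k))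
      = ((n : ℂ) * A i k) • W.mulVec (colProd (sinv B) (sinv (sinv B)) i k) := by
    rw [Matrix.mulVec_mulVec, hW, ← Matrix.mulVec_mulVec, e, Matrix.mulVec_smul]
  constructor
  · intro h
    rw [h, Matrix.mulVec_smul, e, smul_comm] at eW
    exact (smul_right_injective _ hc eW).symm
  · intro h
    rw [h, smul_comm, ← e, ← Matrix.mulVec_smul] at eW
    have := congrArg B⁻¹.mulVec eW
    simpa only [Matrix.mulVec_mulVec, ← Matrix.mul_assoc, hBB, Matrix.one_mul, Matrix.one_mulVec]
      using this

/-- Normal form of a paired couple. -/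
lemma paired_form (hn : 0 < n) (g : Good A B) (g' : Good A Bᵀ) {H K : Matrix (Fin n) (Fin n) ℂ}
    (h : Paired A B H K) : ∃ X Y X' Y', IsTheta A (sinv A) X Y ∧ IsTheta A (sinv A) X' Y' ∧
      H = A ⊙ Y ∧ Kᵀ = A ⊙ Y' ∧ B * X'ᵀ = X * B := by
  obtain ⟨S, h1, h2⟩ := h
  obtain ⟨X, Y, hX, hH, hS⟩ := g.toX h1
  obtain ⟨X', Y', hX', hK, hS'⟩ := g'.toX h2
  refine ⟨X, Y, X', Y', hX, hX', hH, hK, ?_⟩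
  have e : Xᵀ * B = B * X' := by
    rw [← hS, ← Matrix.transpose_transpose S, hS']; simp
  have hc := g'.comm hn g'.bbt hX'
  rw [Matrix.transpose_transpose] at hc
  have e2 : X' * Bᵀ = Bᵀ * Xᵀ := by
    apply g.uB.mul_right_cancel
    rw [Matrix.mul_assoc, ← hc, Matrix.mul_assoc, ← e, Matrix.mul_assoc]
  have := congrArg Matrix.transpose e2
  simpa using this

lemma paired_smul (hn : 0 < n) (g : Good A B) (g' : Good A Bᵀ)
    {F SF TF H K : Matrix (Fin n) (Fin n) ℂ}
    (hSF : IsTheta A (sinv A) F SF) (hTF : IsTheta (sinv B) (sinv (sinv B)) F TF)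
    (h : Paired A B H K) : Paired A B (SF ⊙ H) (TF ⊙ K) := by
  have hdetB : IsUnit B.det := (Matrix.isUnit_iff_isUnit_det B).1 g.uB
  have hBB' : B * B⁻¹ = 1 := Matrix.mul_nonsing_inv B hdetB
  obtain ⟨X, Y, X', Y', hX, hX', hH, hK, e⟩ := paired_form hn g g' h
  have eP : B * (B⁻¹ * F * B) = F * B := by
    rw [← Matrix.mul_assoc, ← Matrix.mul_assoc, hBB', Matrix.one_mul]
  have hP := (g'.conj hn eP).2 hTF
  set P := B⁻¹ * F * B
  have t1 := g.ofX (isTheta_mul hSF hX)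
  have t2 := g'.ofX (isTheta_mul (g.trans hn hP) hX')
  have bb := g'.bbt
  rw [Matrix.transpose_transpose] at bb
  have c1 := g.comm hn (isTheta_mul (g.trans hn hX') hP) bb
  have c2 := g.comm hn (g.trans hn hX') hP
  refine ⟨_, (?_ : IsTheta A B (SF ⊙ H) ((F * X)ᵀ * B)), ?_⟩
  · convert t1 using 1
    rw [hH]; ext i j; simp only [Matrix.hadamard_apply]; ring
  · convert t2 using 1
    · rw [Matrix.transpose_hadamard, hK]; ext i j; simp only [Matrix.hadamard_apply]; ring
    · apply g.uB.mul_right_cancel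
      simp only [Matrix.transpose_mul, Matrix.transpose_transpose]
      calc Bᵀ * (F * X) * B = Bᵀ * F * (X * B) := by simp only [Matrix.mul_assoc]
        _ = Bᵀ * (F * B) * X'ᵀ := by rw [← e]; simp only [Matrix.mul_assoc]
        _ = Bᵀ * B * (P * X'ᵀ) := by rw [← eP]; simp only [Matrix.mul_assoc]
        _ = X'ᵀ * P * (Bᵀ * B) := by rw [← c2, ← c1]
        _ = _ := by simp only [Matrix.mul_assoc]

lemma paired_add {H K H₁ K₁ : Matrix (Fin n) (Fin n) ℂ}
    (h : Paired A B H K) (h₁ : Paired A B H₁ K₁) : Paired A B (H + H₁) (K + K₁) := by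
  obtain ⟨S, a, b⟩ := h
  obtain ⟨S₁, a₁, b₁⟩ := h₁
  exact ⟨S + S₁, isTheta_add a a₁, by
    rw [Matrix.transpose_add, Matrix.transpose_add]; exact isTheta_add b b₁⟩

lemma exists_Z (hn : 0 < n) (g : Good A B) (g' : Good A Bᵀ)
    {H K H₁ K₁ : Matrix (Fin n) (Fin n) ℂ} (h : Paired A B H K) (h₁ : Paired A B H₁ K₁) :
    ∃ Z, IsTheta A (sinv A) Z (H ⊙ H₁) ∧
      IsTheta (sinv B) (sinv (sinv B)) Z (K ⊙ K₁) := by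
  have hn0 : (n : ℂ) ≠ 0 := by exact_mod_cast hn.ne'
  obtain ⟨X, Y, X', Y', hX, hX', hH, hK, e⟩ := paired_form hn g g' h
  obtain ⟨X₁, Y₁, X₁', Y₁', hX₁, hX₁', hH₁, hK₁, e₁⟩ := paired_form hn g g' h₁
  have bb := g'.bbt
  rw [Matrix.transpose_transpose] at bb
  have hAT : Aᵀ = A := by ext i j; exact g.sym j i
  have hK' : K = A ⊙ Y'ᵀ := by
    rw [← Matrix.transpose_transpose K, hK, Matrix.transpose_hadamard, hAT]
  have hK₁' : K₁ = A ⊙ Y₁'ᵀ := by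
    rw [← Matrix.transpose_transpose K₁, hK₁, Matrix.transpose_hadamard, hAT]
  refine ⟨((n : ℂ) ^ 2)⁻¹ • (X * (B * Bᵀ) * X₁), ?_, ?_⟩
  · convert isTheta_smul ((n : ℂ) ^ 2)⁻¹ (isTheta_mul (isTheta_mul hX g.bbt) hX₁) using 1
    rw [hH, hH₁]
    ext i j
    simp only [Matrix.hadamard_apply, Matrix.smul_apply, smul_eq_mul]
    field_simp
  · have t := isTheta_smul ((n : ℂ) ^ 2)⁻¹
      (isTheta_mul (isTheta_mul (g.trans hn hX') bb) (g.trans hn hX₁'))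
    have t' := (g'.conj hn (W := ((n : ℂ) ^ 2)⁻¹ • (X * (B * Bᵀ) * X₁)) ?_).1 t
    · convert t' using 1
      rw [hK', hK₁']
      ext i j
      simp only [Matrix.hadamard_apply, Matrix.smul_apply, smul_eq_mul]
      field_simp
    · rw [Matrix.mul_smul, Matrix.smul_mul]
      congr 1
      calc B * (X'ᵀ * (Bᵀ * B) * X₁'ᵀ) = (B * X'ᵀ) * Bᵀ * (B * X₁'ᵀ) := by
            simp only [Matrix.mul_assoc]
        _ = _ := by rw [e, e₁]; simp only [Matrix.mul_assoc]

lemma blockMat_hadamard (P Q R S T U P' Q' R' S' T' U' : Matrix (Fin n) (Fin n) ℂ) :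
    blockMat P Q R S T U ⊙ blockMat P' Q' R' S' T' U'
      = blockMat (P ⊙ P') (Q ⊙ Q') (R ⊙ R') (S ⊙ S') (T ⊙ T') (U ⊙ U') := by
  ext ⟨x, i⟩ ⟨y, j⟩
  fin_cases x <;> fin_cases y <;> rfl

lemma aux_plus (a b c d : Matrix (Fin n) (Fin n) ℂ) :
    (a + b) ⊙ (c + d) = a ⊙ c + b ⊙ d + (a ⊙ d + c ⊙ b) := by
  ext i j
  simp only [Matrix.hadamard_apply, Matrix.add_apply]
  ring

lemma aux_minus (a b c d : Matrix (Fin n) (Fin n) ℂ) :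
    (a - b) ⊙ (c - d) = a ⊙ c + b ⊙ d - (a ⊙ d + c ⊙ b) := by
  ext i j
  simp only [Matrix.hadamard_apply, Matrix.add_apply, Matrix.sub_apply]
  ring

end Helpers

theorem blockMat_schur {n : ℕ} (hn : 0 < n) (A B : Matrix (Fin n) (Fin n) ℂ)
    (h : IsInvertibleJonesPair A B) (hAs : Aᵀ = A)
    (F F₁ G G₁ H H₁ K K₁ SF SF₁ TF TF₁ SG SG₁ SGt SG₁t : Matrix (Fin n) (Fin n) ℂ)
    (hSF : IsTheta A (sinv A) F SF) (hSF₁ : IsTheta A (sinv A) F₁ SF₁)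
    (hTF : IsTheta (sinv B) (sinv (sinv B)) F TF)
    (hTF₁ : IsTheta (sinv B) (sinv (sinv B)) F₁ TF₁)
    (hSG : IsTheta A B G SG) (hSG₁ : IsTheta A B G₁ SG₁)
    (hSGt : IsTheta A B Gᵀ SGt) (hSG₁t : IsTheta A B G₁ᵀ SG₁t)
    (hHK : Paired A B H K) (hHK₁ : Paired A B H₁ K₁) :
    InNomura A (sinv A) (H ⊙ H₁) ∧
    ∃ SHH : Matrix (Fin n) (Fin n) ℂ, IsTheta A (sinv A) (H ⊙ H₁) SHH ∧
      (InNomura A (sinv A) (F * F₁ + (n : ℂ)⁻¹ • SHHᵀ) ∧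
       InNomura A B (G * G₁) ∧
       InNomura A B (SF ⊙ H₁ + SF₁ ⊙ H) ∧
       Paired A B (SF ⊙ H₁ + SF₁ ⊙ H) (TF ⊙ K₁ + TF₁ ⊙ K) ∧
       ∃ SF' TF' SG' SG't : Matrix (Fin n) (Fin n) ℂ,
         IsTheta A (sinv A) (F * F₁ + (n : ℂ)⁻¹ • SHHᵀ) SF' ∧
         IsTheta (sinv B) (sinv (sinv B)) (F * F₁ + (n : ℂ)⁻¹ • SHHᵀ) TF' ∧
         IsTheta A B (G * G₁) SG' ∧
         IsTheta A B (G * G₁)ᵀ SG't ∧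
         blockMat (SF + H) (SF - H) SG SGtᵀ (TF + K) (TF - K) ⊙
             blockMat (SF₁ + H₁) (SF₁ - H₁) SG₁ SG₁tᵀ (TF₁ + K₁) (TF₁ - K₁) =
           blockMat (SF' + (SF ⊙ H₁ + SF₁ ⊙ H)) (SF' - (SF ⊙ H₁ + SF₁ ⊙ H))
             SG' SG'tᵀ
             (TF' + (TF ⊙ K₁ + TF₁ ⊙ K)) (TF' - (TF ⊙ K₁ + TF₁ ⊙ K))) := by
  obtain ⟨g, g'⟩ := good_of hn h hAs
  have hn0 : (n : ℂ) ≠ 0 := by exact_mod_cast hn.ne'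
  obtain ⟨Z, hZA, hZB⟩ := exists_Z hn g g' hHK hHK₁
  have hd := g.dual hZA
  have hZ : (n : ℂ)⁻¹ • ((n : ℂ) • Zᵀ)ᵀ = Z := by
    rw [Matrix.transpose_smul, Matrix.transpose_transpose, smul_smul, inv_mul_cancel₀ hn0,
      one_smul]
  have hF' := isTheta_add (isTheta_mul hSF hSF₁) hZA
  have hT' := isTheta_add (isTheta_mul hTF hTF₁) hZB
  have hG' := isTheta_mul hSG hSG₁
  have hGt' := isTheta_mul hSG₁t hSGt
  rw [← Matrix.transpose_mul] at hGt'
  have hP := paired_add (paired_smul hn g g' hSF hTF hHK₁) (paired_smul hn g g' hSF₁ hTF₁ hHK)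
  refine ⟨fun i j => ⟨_, hd i j⟩, _, hd, ?_⟩
  rw [hZ]
  refine ⟨fun i j => ⟨_, hF' i j⟩, fun i j => ⟨_, hG' i j⟩, ?_, hP,
    _, _, _, _, hF', hT', hG', hGt', ?_⟩
  · obtain ⟨S, hS, -⟩ := hP
    exact fun i j => ⟨_, hS i j⟩
  · rw [blockMat_hadamard, aux_plus, aux_minus, aux_plus, aux_minus, Matrix.transpose_hadamard,
      Matrix.hadamard_comm SG₁tᵀ]
end
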